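/- arXiv:2508.04112 — 2 statements merged into one kernel-verified Lean document; each statement's English description precedes it below -/
import Mathlib

section
/- Let L, T > 0 and let f : ℝ → ℝ be twice continuously differentiable with f″ bounded on ℝ. Let u : [0,T] × ℝ → ℝ be smooth, L-periodic in x, with all partial derivatives bounded, solving ∂_t u + ∂_x f(u) − ∂_x² ∂_t u = 0. Then there exists C > 0 such that for every τ ∈ (0,1] and every C¹ triple q = (q₀, q₁, q₂), L-periodic in x, solving ∂_t q₀ + ∂_x f(q₀) + ∂_x q₂ = 0, ∂_t q₁ + τ ∂_x q₁ = −q₂, τ ∂_t q₂ + ∂_x q₀ = q₁ with initial data q₀(0,·) = u(0,·), q₁(0,·) = ∂_x u(0,·), q₂(0,·) = −∂_t ∂_x u(0,·), one has sup_{t ∈ [0,T]} ( ‖u(t,·) − q₀(t,·)‖_{L²(0,L)} + ‖∂_x u(t,·) − q₁(t,·)‖_{L²(0,L)} ) ≤ C τ. -/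
/-!
The exact solution `u`, completed to the triple `(u, ∂ₓu, -∂ₜ∂ₓu)`, solves the hyperbolic system up
to residuals of size `τ`. The difference `e` of the two solutions is measured by
`∫ (e₀² + e₁² + τ e₂²) / 2`, whose nonlinear flux terms form an exact derivative up to a quadratic
Taylor remainder of `f`. The residual `τ g`, `g = ∂ₜ²∂ₓu`, of the third equation is tested against
`e₂`, which this energy controls only with weight `τ`, so Grönwall alone would lose a factor `√τ`.
The second equation expresses `e₂` through derivatives of `e₁`; moving these derivatives onto the
smooth function `g` adds the corrector `τ e₁ g` to the energy and leaves, up to multiples of the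
energy, a source of order `τ²`.
-/

open MeasureTheory

/-- Partial derivative with respect to the first (time) variable. -/
noncomputable def pdt (u : ℝ → ℝ → ℝ) : ℝ → ℝ → ℝ :=
  fun t x => deriv (fun s => u s x) t

/-- Partial derivative with respect to the second (space) variable. -/
noncomputable def pdx (u : ℝ → ℝ → ℝ) : ℝ → ℝ → ℝ :=
  fun t x => deriv (fun y => u t y) x

open Set Filter Function
open scoped NNReal

section PartialDerivatives

variable {v w : ℝ → ℝ → ℝ}

lemma hasDerivAt_fderiv_fst (hv : Differentiable ℝ (uncurry v)) (t x : ℝ) :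
    HasDerivAt (fun s => v s x) (fderiv ℝ (uncurry v) (t, x) (1, 0)) t :=
  (hv (t, x)).hasFDerivAt.comp_hasDerivAt (f := fun s => (s, x)) t
    ((hasDerivAt_id t).prodMk (hasDerivAt_const t x))

lemma hasDerivAt_fderiv_snd (hv : Differentiable ℝ (uncurry v)) (t x : ℝ) :
    HasDerivAt (v t) (fderiv ℝ (uncurry v) (t, x) (0, 1)) x :=
  (hv (t, x)).hasFDerivAt.comp_hasDerivAt x ((hasDerivAt_const x t).prodMk (hasDerivAt_id x))

lemma uncurry_pdt (hv : Differentiable ℝ (uncurry v)) :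
    uncurry (pdt v) = fun p => fderiv ℝ (uncurry v) p (1, 0) :=
  funext fun p => (hasDerivAt_fderiv_fst hv p.1 p.2).deriv

lemma uncurry_pdx (hv : Differentiable ℝ (uncurry v)) :
    uncurry (pdx v) = fun p => fderiv ℝ (uncurry v) p (0, 1) :=
  funext fun p => (hasDerivAt_fderiv_snd hv p.1 p.2).deriv

lemma hasDerivAt_pdt (hv : Differentiable ℝ (uncurry v)) (t x : ℝ) :
    HasDerivAt (fun s => v s x) (pdt v t x) t :=
  (hasDerivAt_fderiv_fst hv t x).differentiableAt.hasDerivAt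

lemma hasDerivAt_pdx (hv : Differentiable ℝ (uncurry v)) (t x : ℝ) :
    HasDerivAt (v t) (pdx v t x) x :=
  (hasDerivAt_fderiv_snd hv t x).differentiableAt.hasDerivAt

lemma pdt_sub (hv : Differentiable ℝ (uncurry v)) (hw : Differentiable ℝ (uncurry w)) :
    pdt (v - w) = pdt v - pdt w :=
  funext₂ fun t x => ((hasDerivAt_pdt hv t x).sub (hasDerivAt_pdt hw t x)).deriv

lemma pdx_sub (hv : Differentiable ℝ (uncurry v)) (hw : Differentiable ℝ (uncurry w)) :
    pdx (v - w) = pdx v - pdx w :=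
  funext₂ fun t x => ((hasDerivAt_pdx hv t x).sub (hasDerivAt_pdx hw t x)).deriv

lemma pdt_add (hv : Differentiable ℝ (uncurry v)) (hw : Differentiable ℝ (uncurry w)) :
    pdt (v + w) = pdt v + pdt w :=
  funext₂ fun t x => ((hasDerivAt_pdt hv t x).add (hasDerivAt_pdt hw t x)).deriv

lemma pdx_add (hv : Differentiable ℝ (uncurry v)) (hw : Differentiable ℝ (uncurry w)) :
    pdx (v + w) = pdx v + pdx w :=
  funext₂ fun t x => ((hasDerivAt_pdx hv t x).add (hasDerivAt_pdx hw t x)).deriv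

lemma pdx_comp {f : ℝ → ℝ} (hf : Differentiable ℝ f) (hv : Differentiable ℝ (uncurry v))
    (t x : ℝ) : pdx (fun s y => f (v s y)) t x = deriv f (v t x) * pdx v t x :=
  ((hf (v t x)).hasDerivAt.comp x (hasDerivAt_pdx hv t x)).deriv

lemma contDiff_uncurry_pdt {m n : WithTop ℕ∞} (hv : ContDiff ℝ n (uncurry v))
    (hmn : m + 1 ≤ n) : ContDiff ℝ m (uncurry (pdt v)) := by
  rw [uncurry_pdt (hv.differentiable (one_pos.trans_le (le_add_self.trans hmn)).ne')]
  exact (hv.fderiv_right hmn).clm_apply contDiff_const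

lemma contDiff_uncurry_pdx {m n : WithTop ℕ∞} (hv : ContDiff ℝ n (uncurry v))
    (hmn : m + 1 ≤ n) : ContDiff ℝ m (uncurry (pdx v)) := by
  rw [uncurry_pdx (hv.differentiable (one_pos.trans_le (le_add_self.trans hmn)).ne')]
  exact (hv.fderiv_right hmn).clm_apply contDiff_const

lemma continuous_uncurry_pdt (hv : ContDiff ℝ 1 (uncurry v)) : Continuous (uncurry (pdt v)) :=
  (contDiff_uncurry_pdt (m := 0) hv (zero_add 1).le).continuous

lemma continuous_uncurry_pdx (hv : ContDiff ℝ 1 (uncurry v)) : Continuous (uncurry (pdx v)) :=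
  (contDiff_uncurry_pdx (m := 0) hv (zero_add 1).le).continuous

lemma pdx_pdt_comm (hv : ContDiff ℝ 2 (uncurry v)) : pdx (pdt v) = pdt (pdx v) := by
  have hd : Differentiable ℝ (uncurry v) := hv.differentiable two_ne_zero
  have hdd : Differentiable ℝ (fderiv ℝ (uncurry v)) :=
    (hv.fderiv_right (m := 1) one_add_one_eq_two.le).differentiable one_ne_zero
  have ht : Differentiable ℝ (uncurry (pdt v)) :=
    (contDiff_uncurry_pdt hv one_add_one_eq_two.le).differentiable one_ne_zero
  have hx : Differentiable ℝ (uncurry (pdx v)) :=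
    (contDiff_uncurry_pdx hv one_add_one_eq_two.le).differentiable one_ne_zero
  have happly (p e : ℝ × ℝ) : HasFDerivAt (fun p => fderiv ℝ (uncurry v) p e)
      ((fderiv ℝ (fderiv ℝ (uncurry v)) p).flip e) p := by
    simpa using (hdd p).hasFDerivAt.clm_apply (hasFDerivAt_const e p)
  apply uncurry_injective
  rw [uncurry_pdx ht, uncurry_pdt hx, uncurry_pdt hd, uncurry_pdx hd]
  funext p
  rw [(happly p _).fderiv, (happly p _).fderiv]
  exact hv.contDiffAt.isSymmSndFDerivAt (by simp) _ _

lemma periodic_pdt {L : ℝ} (hv : ∀ t, Periodic (v t) L) (t : ℝ) : Periodic (pdt v t) L :=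
  fun x => by simp only [pdt, fun s => hv s x]

lemma periodic_pdx {L : ℝ} (hv : ∀ t, Periodic (v t) L) (t : ℝ) : Periodic (pdx v t) L :=
  fun x => (deriv_comp_add_const (v t) L x).symm.trans
    (congrArg (fun w => deriv w x) (funext (hv t)))

lemma eventually_forall_abs_le_of_periodic {L : ℝ} (hL : 0 < L) (hv : Continuous (uncurry v))
    (hper : ∀ t, Periodic (v t) L) (a b : ℝ) :
    ∀ᶠ K in atTop, ∀ t ∈ Icc a b, ∀ x, |v t x| ≤ K := by
  obtain ⟨B, hB⟩ := ((isCompact_Icc (a := a) (b := b)).prod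
    (isCompact_Icc (a := 0) (b := L))).exists_bound_of_continuousOn hv.continuousOn
  filter_upwards [eventually_ge_atTop B] with K hK t ht x
  obtain ⟨y, hy, hxy⟩ := (hper t).exists_mem_Ico₀ hL x
  rw [hxy]
  exact (hB (t, y) ⟨ht, Ico_subset_Icc_self hy⟩).trans hK

end PartialDerivatives

section BalanceLaw

variable {φ H : ℝ → ℝ → ℝ}

lemma hasDerivAt_intervalIntegral_pdt (hφ : ContDiff ℝ 1 (uncurry φ)) (a b t : ℝ) :
    HasDerivAt (fun s => ∫ x in a..b, φ s x) (∫ x in a..b, pdt φ t x) t := by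
  have hφt := continuous_uncurry_pdt hφ
  obtain ⟨B, hB⟩ := ((isCompact_closedBall t 1).prod
    (isCompact_uIcc (a := a) (b := b))).exists_bound_of_continuousOn hφt.continuousOn
  exact (intervalIntegral.hasDerivAt_integral_of_dominated_loc_of_deriv_le
    (F := φ) (F' := pdt φ) (bound := fun _ => B) (Metric.closedBall_mem_nhds t one_pos)
    (.of_forall fun s => (hφ.continuous.uncurry_left s).aestronglyMeasurable)
    ((hφ.continuous.uncurry_left t).intervalIntegrable _ _)
    (hφt.uncurry_left t).aestronglyMeasurable
    (.of_forall fun x hx s hs => hB (s, x) ⟨hs, uIoc_subset_uIcc hx⟩)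
    intervalIntegrable_const
    (.of_forall fun x _ s _ => hasDerivAt_pdt (hφ.differentiable one_ne_zero) s x)).2

lemma intervalIntegral_pdx_eq_zero (hH : ContDiff ℝ 1 (uncurry H)) {L : ℝ}
    (hper : ∀ t, Periodic (H t) L) (t : ℝ) : ∫ x in (0 : ℝ)..L, pdx H t x = 0 := by
  rw [intervalIntegral.integral_eq_sub_of_hasDerivAt
    (fun x _ => hasDerivAt_pdx (hH.differentiable one_ne_zero) t x)
    (((continuous_uncurry_pdx hH).uncurry_left t).intervalIntegrable _ _), (hper t).eq, sub_self]

lemma integral_le_gronwallBound_of_balance_law {L T a b : ℝ} (hL : 0 ≤ L)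
    (hφ : ContDiff ℝ 1 (uncurry φ)) (hH : ContDiff ℝ 1 (uncurry H))
    (hper : ∀ t, Periodic (H t) L)
    (hbal : ∀ t ∈ Icc 0 T, ∀ x, pdt φ t x + pdx H t x ≤ a * φ t x + b)
    {t : ℝ} (ht : t ∈ Icc 0 T) :
    ∫ x in (0 : ℝ)..L, φ t x ≤ gronwallBound (∫ x in (0 : ℝ)..L, φ 0 x) a (b * L) t := by
  have hslice {v : ℝ → ℝ → ℝ} (hv : Continuous (uncurry v)) (s : ℝ) :
      IntervalIntegrable (v s) volume 0 L := (hv.uncurry_left s).intervalIntegrable _ _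
  have hφi := hslice hφ.continuous
  have hφti := hslice (continuous_uncurry_pdt hφ)
  have hHxi := hslice (continuous_uncurry_pdx hH)
  have hderiv := hasDerivAt_intervalIntegral_pdt hφ 0 L
  have hle (s : ℝ) (hs : s ∈ Ico 0 T) :
      ∫ x in (0 : ℝ)..L, pdt φ s x ≤ a * (∫ x in (0 : ℝ)..L, φ s x) + b * L :=
    calc ∫ x in (0 : ℝ)..L, pdt φ s x
        = ∫ x in (0 : ℝ)..L, (pdt φ s x + pdx H s x) := by
          rw [intervalIntegral.integral_add (hφti s) (hHxi s),
            intervalIntegral_pdx_eq_zero hH hper, add_zero]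
      _ ≤ ∫ x in (0 : ℝ)..L, (a * φ s x + b) :=
          intervalIntegral.integral_mono_on hL ((hφti s).add (hHxi s))
            (((hφi s).const_mul a).add intervalIntegrable_const)
            fun x _ => hbal s (Ico_subset_Icc_self hs) x
      _ = a * (∫ x in (0 : ℝ)..L, φ s x) + b * L := by
          rw [intervalIntegral.integral_add ((hφi s).const_mul a) intervalIntegrable_const,
            intervalIntegral.integral_const_mul, intervalIntegral.integral_const, smul_eq_mul,
            sub_zero, mul_comm L b]
  simpa only [sub_zero] using le_gronwallBound_of_liminf_deriv_right_le
    (fun s _ => (hderiv s).continuousAt.continuousWithinAt)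
    (fun s _ _ hr => (hderiv s).hasDerivWithinAt.liminf_right_slope_le hr) le_rfl hle t ht

end BalanceLaw

lemma gronwallBound_zero_mul (K c ε x : ℝ) :
    gronwallBound 0 K (c * ε) x = c * gronwallBound 0 K ε x := by
  unfold gronwallBound
  split_ifs <;> ring

lemma norm_taylor_remainder_le_of_lipschitzWith_deriv {E : Type*} [NormedAddCommGroup E]
    [NormedSpace ℝ E] {f : ℝ → E} {M : ℝ≥0} (hf : Differentiable ℝ f)
    (hf' : LipschitzWith M (deriv f)) (a b : ℝ) :
    ‖f b - f a - (b - a) • deriv f a‖ ≤ M * (b - a) ^ 2 := by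
  have hremainder (y : ℝ) :
      HasDerivAt (fun y => f y - (y - a) • deriv f a) (deriv f y - deriv f a) y := by
    simpa using (hf y).hasDerivAt.fun_sub (((hasDerivAt_id y).sub_const a).smul_const (deriv f a))
  have hderiv (y : ℝ) (hy : y ∈ uIcc a b) : ‖deriv f y - deriv f a‖ ≤ M * |b - a| :=
    (hf'.norm_sub_le y a).trans
      (mul_le_mul_of_nonneg_left (abs_sub_left_of_mem_uIcc hy) M.coe_nonneg)
  have hsegment := (convex_uIcc a b).norm_image_sub_le_of_norm_hasDerivWithin_le
    (fun y _ => (hremainder y).hasDerivWithinAt) hderiv left_mem_uIcc right_mem_uIcc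
  rw [Real.norm_eq_abs, mul_assoc, ← sq, sq_abs] at hsegment
  simpa [sub_right_comm] using hsegment

lemma contDiff_one_of_hasDerivAt_of_continuous {𝕜 E : Type*} [NontriviallyNormedField 𝕜]
    [NormedAddCommGroup E] [NormedSpace 𝕜 E] {f F : 𝕜 → E} (hf : Continuous f)
    (hF : ∀ y, HasDerivAt F (f y) y) : ContDiff 𝕜 1 F :=
  contDiff_one_iff_deriv.2 ⟨fun y => (hF y).differentiableAt, (funext fun y => (hF y).deriv) ▸ hf⟩

lemma sqrt_integral_sq_add_sqrt_integral_sq_le {a b : ℝ} (hab : a ≤ b) {v w : ℝ → ℝ}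
    (hv : Continuous v) (hw : Continuous w) :
    √(∫ x in a..b, v x ^ 2) + √(∫ x in a..b, w x ^ 2) ≤
      2 * √(∫ x in a..b, (v x ^ 2 + w x ^ 2)) := by
  have hmono {z : ℝ → ℝ} (hz : Continuous z) (hle : ∀ x, z x ≤ v x ^ 2 + w x ^ 2) :
      √(∫ x in a..b, z x) ≤ √(∫ x in a..b, (v x ^ 2 + w x ^ 2)) :=
    Real.sqrt_le_sqrt (intervalIntegral.integral_mono hab (hz.intervalIntegrable _ _)
      (((hv.pow 2).add (hw.pow 2)).intervalIntegrable _ _) hle)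
  rw [two_mul]
  exact add_le_add (hmono (hv.pow 2) fun x => le_add_of_nonneg_right (sq_nonneg (w x)))
    (hmono (hw.pow 2) fun x => le_add_of_nonneg_left (sq_nonneg (v x)))

lemma error_source_le {K M τ a b r v w g g' g'' : ℝ} (hM : 0 ≤ M) (hτ : τ ∈ Ioc 0 1)
    (hr : |r| ≤ M * a ^ 2) (hv : |v| ≤ K) (hw : |w| ≤ K) (hg : |g| ≤ K) (hg' : |g'| ≤ K)
    (hg'' : |g''| ≤ K) :
    -(v * r) + τ * b * (g' - w + τ * g'') - τ ^ 2 * (g * w) ≤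
      (K * M + 1) * (a ^ 2 + b ^ 2) + 4 * K ^ 2 * τ ^ 2 := by
  have hK : 0 ≤ K := (abs_nonneg v).trans hv
  have hvr : -(v * r) ≤ K * (M * a ^ 2) := by
    refine (neg_le_abs _).trans ?_
    rw [abs_mul]
    gcongr
  have hgw : -(g * w) ≤ K * K := by
    refine (neg_le_abs _).trans ?_
    rw [abs_mul]
    gcongr
  have hτg'' : |τ * g''| ≤ K := by
    rw [abs_mul, abs_of_pos hτ.1]
    exact (mul_le_of_le_one_left (abs_nonneg _) hτ.2).trans hg''
  have hlin : |g' - w + τ * g''| ≤ 3 * K := by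
    linarith [abs_add_le (g' - w) (τ * g''), abs_sub g' w]
  have hyoung : τ * b * (g' - w + τ * g'') ≤ b ^ 2 + τ ^ 2 * (3 * K ^ 2) := by
    nlinarith [sq_nonneg (b - τ * (g' - w + τ * g'') / 2),
      mul_le_mul_of_nonneg_left (sq_le_sq' (abs_le.1 hlin).1 (abs_le.1 hlin).2) (sq_nonneg τ)]
  nlinarith [mul_le_mul_of_nonneg_left hgw (sq_nonneg τ),
    mul_nonneg (mul_nonneg hK hM) (sq_nonneg b), sq_nonneg a]

section ErrorSystem

/-- The equations satisfied on `[0, T] × ℝ` by the differences `e₀`, `e₁`, `e₂` between a solution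
of the hyperbolic approximation and a reference triple with first component `u` and the same initial
data. The reference triple leaves the residual `τ h` in the second equation and `-τ g` in the third
one. -/
structure IsErrorSystem (L T τ : ℝ) (f : ℝ → ℝ) (u h g e₀ e₁ e₂ : ℝ → ℝ → ℝ) : Prop where
  contDiff₀ : ContDiff ℝ 1 (uncurry e₀)
  contDiff₁ : ContDiff ℝ 1 (uncurry e₁)
  contDiff₂ : ContDiff ℝ 1 (uncurry e₂)
  periodic₀ : ∀ t, Periodic (e₀ t) L
  periodic₁ : ∀ t, Periodic (e₁ t) L
  periodic₂ : ∀ t, Periodic (e₂ t) L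
  eq₀ : ∀ t ∈ Icc 0 T, ∀ x, pdt e₀ t x
    + (pdx (fun s y => f ((u + e₀) s y)) t x - pdx (fun s y => f (u s y)) t x) + pdx e₂ t x = 0
  eq₁ : ∀ t ∈ Icc 0 T, ∀ x, pdt e₁ t x + τ * pdx e₁ t x + e₂ t x = -(τ * h t x)
  eq₂ : ∀ t ∈ Icc 0 T, ∀ x, τ * pdt e₂ t x + pdx e₀ t x - e₁ t x = τ * g t x
  init₀ : ∀ x, e₀ 0 x = 0
  init₁ : ∀ x, e₁ 0 x = 0
  init₂ : ∀ x, e₂ 0 x = 0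

/-- Regularity, periodicity and a common bound `K` on `[0, T] × ℝ` for the coefficients of an error
system. -/
structure IsCoefficientBound (L T K : ℝ) (u h g : ℝ → ℝ → ℝ) : Prop where
  contDiff_u : ContDiff ℝ 1 (uncurry u)
  contDiff_g : ContDiff ℝ 1 (uncurry g)
  periodic_u : ∀ t, Periodic (u t) L
  periodic_g : ∀ t, Periodic (g t) L
  abs_pdx_u_le : ∀ t ∈ Icc 0 T, ∀ x, |pdx u t x| ≤ K
  abs_h_le : ∀ t ∈ Icc 0 T, ∀ x, |h t x| ≤ K
  abs_g_le : ∀ t ∈ Icc 0 T, ∀ x, |g t x| ≤ K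
  abs_pdt_g_le : ∀ t ∈ Icc 0 T, ∀ x, |pdt g t x| ≤ K
  abs_pdx_g_le : ∀ t ∈ Icc 0 T, ∀ x, |pdx g t x| ≤ K

/-- The energy density of an error system, with the corrector `τ e₁ g` that compensates the residual
`τ g` of the third equation. -/
noncomputable def errorEnergy (τ : ℝ) (g e₀ e₁ e₂ : ℝ → ℝ → ℝ) : ℝ → ℝ → ℝ := fun t x =>
  (e₀ t x ^ 2 + e₁ t x ^ 2 + τ * e₂ t x ^ 2) / 2 + τ * (e₁ t x * g t x)

/-- The flux of `errorEnergy`, where `F` is a primitive of `f`. -/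
noncomputable def errorFlux (τ : ℝ) (f F : ℝ → ℝ) (u g e₀ e₁ e₂ : ℝ → ℝ → ℝ) : ℝ → ℝ → ℝ :=
  fun t x => e₀ t x * f (u t x + e₀ t x) - (F (u t x + e₀ t x) - F (u t x))
    + e₀ t x * e₂ t x + τ * e₁ t x ^ 2 / 2 + τ ^ 2 * (g t x * e₁ t x)

variable {L T τ K : ℝ} {M : ℝ≥0} {f F : ℝ → ℝ} {u h g e₀ e₁ e₂ : ℝ → ℝ → ℝ}

lemma contDiff_errorEnergy (hg : ContDiff ℝ 1 (uncurry g)) (h₀ : ContDiff ℝ 1 (uncurry e₀))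
    (h₁ : ContDiff ℝ 1 (uncurry e₁)) (h₂ : ContDiff ℝ 1 (uncurry e₂)) :
    ContDiff ℝ 1 (uncurry (errorEnergy τ g e₀ e₁ e₂)) := by
  unfold errorEnergy
  fun_prop

lemma contDiff_errorFlux (hf : ContDiff ℝ 1 f) (hF : ContDiff ℝ 1 F)
    (hu : ContDiff ℝ 1 (uncurry u)) (hg : ContDiff ℝ 1 (uncurry g))
    (h₀ : ContDiff ℝ 1 (uncurry e₀)) (h₁ : ContDiff ℝ 1 (uncurry e₁))
    (h₂ : ContDiff ℝ 1 (uncurry e₂)) :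
    ContDiff ℝ 1 (uncurry (errorFlux τ f F u g e₀ e₁ e₂)) := by
  unfold errorFlux
  fun_prop

lemma pdt_errorEnergy (hg : Differentiable ℝ (uncurry g)) (h₀ : Differentiable ℝ (uncurry e₀))
    (h₁ : Differentiable ℝ (uncurry e₁)) (h₂ : Differentiable ℝ (uncurry e₂)) (t x : ℝ) :
    pdt (errorEnergy τ g e₀ e₁ e₂) t x =
      e₀ t x * pdt e₀ t x + e₁ t x * pdt e₁ t x + τ * e₂ t x * pdt e₂ t x
        + τ * (pdt e₁ t x * g t x + e₁ t x * pdt g t x) := by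
  have d₀ := hasDerivAt_pdt h₀ t x
  have d₁ := hasDerivAt_pdt h₁ t x
  have d₂ := hasDerivAt_pdt h₂ t x
  have d := ((((d₀.fun_pow 2).add (d₁.fun_pow 2)).add ((d₂.fun_pow 2).const_mul τ)).div_const 2).add
    ((d₁.mul (hasDerivAt_pdt hg t x)).const_mul τ)
  refine (d.congr_deriv ?_).deriv
  push_cast
  ring

lemma pdx_errorFlux (hf : Differentiable ℝ f) (hF : ∀ y, HasDerivAt F (f y) y)
    (hu : Differentiable ℝ (uncurry u)) (hg : Differentiable ℝ (uncurry g))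
    (h₀ : Differentiable ℝ (uncurry e₀)) (h₁ : Differentiable ℝ (uncurry e₁))
    (h₂ : Differentiable ℝ (uncurry e₂)) (t x : ℝ) :
    pdx (errorFlux τ f F u g e₀ e₁ e₂) t x =
      e₀ t x * (deriv f (u t x + e₀ t x) * (pdx u t x + pdx e₀ t x))
        - pdx u t x * (f (u t x + e₀ t x) - f (u t x))
        + (pdx e₀ t x * e₂ t x + e₀ t x * pdx e₂ t x) + τ * e₁ t x * pdx e₁ t x
        + τ ^ 2 * (pdx g t x * e₁ t x + g t x * pdx e₁ t x) := by
  have du := hasDerivAt_pdx hu t x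
  have d₀ := hasDerivAt_pdx h₀ t x
  have d₁ := hasDerivAt_pdx h₁ t x
  have df := (hf (u t x + e₀ t x)).hasDerivAt.comp x (du.add d₀)
  have dF := ((hF (u t x + e₀ t x)).comp x (du.add d₀)).sub ((hF (u t x)).comp x du)
  have d := ((((d₀.mul df).sub dF).add (d₀.mul (hasDerivAt_pdx h₂ t x))).add
    (((d₁.fun_pow 2).const_mul τ).div_const 2)).add
    (((hasDerivAt_pdx hg t x).mul d₁).const_mul (τ ^ 2))
  refine (d.congr_deriv ?_).deriv
  simp only [comp_apply, Pi.add_apply]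
  push_cast
  ring

lemma periodic_errorFlux (hc : IsCoefficientBound L T K u h g)
    (he : IsErrorSystem L T τ f u h g e₀ e₁ e₂) (t : ℝ) :
    Periodic (errorFlux τ f F u g e₀ e₁ e₂ t) L := fun x => by
  simp only [errorFlux, hc.periodic_u t x, hc.periodic_g t x, he.periodic₀ t x, he.periodic₁ t x,
    he.periodic₂ t x]

lemma pdt_errorEnergy_add_pdx_errorFlux (hf : Differentiable ℝ f)
    (hF : ∀ y, HasDerivAt F (f y) y) (hu : Differentiable ℝ (uncurry u))
    (hg : Differentiable ℝ (uncurry g)) (he : IsErrorSystem L T τ f u h g e₀ e₁ e₂) {t : ℝ}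
    (ht : t ∈ Icc 0 T) (x : ℝ) :
    pdt (errorEnergy τ g e₀ e₁ e₂) t x + pdx (errorFlux τ f F u g e₀ e₁ e₂) t x =
      -(pdx u t x * (f (u t x + e₀ t x) - f (u t x) - e₀ t x * deriv f (u t x)))
        + τ * e₁ t x * (pdt g t x - h t x + τ * pdx g t x) - τ ^ 2 * (g t x * h t x) := by
  have h₀ := he.contDiff₀.differentiable one_ne_zero
  have h₁ := he.contDiff₁.differentiable one_ne_zero
  have h₂ := he.contDiff₂.differentiable one_ne_zero
  have eq₀ := he.eq₀ t ht x
  have hsum : Differentiable ℝ (uncurry (u + e₀)) := hu.add h₀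
  rw [pdx_comp hf hsum, pdx_comp hf hu, pdx_add hu h₀] at eq₀
  simp only [Pi.add_apply] at eq₀
  rw [pdt_errorEnergy hg h₀ h₁ h₂, pdx_errorFlux hf hF hu hg h₀ h₁ h₂]
  -- Multiplying the second equation by `e₁ + τ g` cancels the contribution `τ g e₂` of the third.
  linear_combination e₀ t x * eq₀ + (e₁ t x + τ * g t x) * he.eq₁ t ht x
    + e₂ t x * he.eq₂ t ht x

lemma sq_add_sq_le_errorEnergy (hτ : 0 ≤ τ) {t x : ℝ} (hg : |g t x| ≤ K) :
    e₀ t x ^ 2 + e₁ t x ^ 2 ≤ 4 * errorEnergy τ g e₀ e₁ e₂ t x + 4 * K ^ 2 * τ ^ 2 := by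
  have hg_sq : g t x ^ 2 ≤ K ^ 2 := sq_le_sq' (abs_le.1 hg).1 (abs_le.1 hg).2
  unfold errorEnergy
  nlinarith [sq_nonneg (e₁ t x + 2 * (τ * g t x)), mul_nonneg hτ (sq_nonneg (e₂ t x)),
    sq_nonneg (e₀ t x), mul_le_mul_of_nonneg_left hg_sq (sq_nonneg τ)]

lemma pdt_errorEnergy_add_pdx_errorFlux_le (hf : Differentiable ℝ f)
    (hf' : LipschitzWith M (deriv f)) (hF : ∀ y, HasDerivAt F (f y) y) (hτ : τ ∈ Ioc 0 1)
    (hc : IsCoefficientBound L T K u h g) (he : IsErrorSystem L T τ f u h g e₀ e₁ e₂) {t : ℝ}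
    (ht : t ∈ Icc 0 T) (x : ℝ) :
    pdt (errorEnergy τ g e₀ e₁ e₂) t x + pdx (errorFlux τ f F u g e₀ e₁ e₂) t x ≤
      4 * (K * M + 1) * errorEnergy τ g e₀ e₁ e₂ t x + 4 * (K * M + 2) * K ^ 2 * τ ^ 2 := by
  have hK : 0 ≤ K := (abs_nonneg _).trans (hc.abs_g_le t ht x)
  have htaylor := norm_taylor_remainder_le_of_lipschitzWith_deriv hf hf' (u t x)
    (u t x + e₀ t x)
  rw [add_sub_cancel_left, smul_eq_mul, Real.norm_eq_abs] at htaylor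
  rw [pdt_errorEnergy_add_pdx_errorFlux hf hF (hc.contDiff_u.differentiable one_ne_zero)
    (hc.contDiff_g.differentiable one_ne_zero) he ht]
  have hsource := error_source_le (b := e₁ t x) M.coe_nonneg hτ htaylor (hc.abs_pdx_u_le t ht x)
    (hc.abs_h_le t ht x) (hc.abs_g_le t ht x) (hc.abs_pdt_g_le t ht x) (hc.abs_pdx_g_le t ht x)
  have hlower : e₀ t x ^ 2 + e₁ t x ^ 2 ≤ _ :=
    sq_add_sq_le_errorEnergy (e₂ := e₂) hτ.1.le (hc.abs_g_le t ht x)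
  linarith [mul_le_mul_of_nonneg_left hlower (by positivity : 0 ≤ K * M + 1)]

lemma integral_errorEnergy_le (hL : 0 ≤ L) (hf : Differentiable ℝ f)
    (hf' : LipschitzWith M (deriv f)) (hτ : τ ∈ Ioc 0 1) (hc : IsCoefficientBound L T K u h g)
    (he : IsErrorSystem L T τ f u h g e₀ e₁ e₂) {t : ℝ} (ht : t ∈ Icc 0 T) :
    ∫ x in (0 : ℝ)..L, errorEnergy τ g e₀ e₁ e₂ t x ≤
      gronwallBound 0 (4 * (K * M + 1)) (4 * (K * M + 2) * K ^ 2 * L) T * τ ^ 2 := by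
  have hK : 0 ≤ K := (abs_nonneg _).trans (hc.abs_g_le t ht 0)
  have hfC : ContDiff ℝ 1 f := contDiff_one_iff_deriv.2 ⟨hf, hf'.continuous⟩
  have hF (y : ℝ) : HasDerivAt (fun z => ∫ s in (0 : ℝ)..z, f s) (f y) y :=
    (hf.continuous.integral_hasStrictDerivAt 0 y).hasDerivAt
  have hgronwall := integral_le_gronwallBound_of_balance_law hL
    (contDiff_errorEnergy hc.contDiff_g he.contDiff₀ he.contDiff₁ he.contDiff₂)
    (contDiff_errorFlux hfC (contDiff_one_of_hasDerivAt_of_continuous hf.continuous hF)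
      hc.contDiff_u hc.contDiff_g he.contDiff₀ he.contDiff₁ he.contDiff₂)
    (periodic_errorFlux hc he)
    (fun s hs => pdt_errorEnergy_add_pdx_errorFlux_le hf hf' hF hτ hc he hs) ht
  have hinit : ∫ x in (0 : ℝ)..L, errorEnergy τ g e₀ e₁ e₂ 0 x = 0 := by
    simp [errorEnergy, he.init₀, he.init₁, he.init₂]
  rw [hinit, mul_right_comm, mul_comm _ (τ ^ 2), gronwallBound_zero_mul] at hgronwall
  rw [mul_comm _ (τ ^ 2)]
  exact hgronwall.trans (mul_le_mul_of_nonneg_left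
    (gronwallBound_mono le_rfl (by positivity) (by positivity) ht.2) (sq_nonneg τ))

lemma exists_integral_sq_error_le (hL : 0 ≤ L) (hf : Differentiable ℝ f)
    (hf' : LipschitzWith M (deriv f)) (hc : IsCoefficientBound L T K u h g) :
    ∃ D, ∀ τ ∈ Ioc 0 1, ∀ e₀ e₁ e₂, IsErrorSystem L T τ f u h g e₀ e₁ e₂ → ∀ t ∈ Icc 0 T,
      ∫ x in (0 : ℝ)..L, (e₀ t x ^ 2 + e₁ t x ^ 2) ≤ D * τ ^ 2 := by
  refine ⟨4 * gronwallBound 0 (4 * (K * M + 1)) (4 * (K * M + 2) * K ^ 2 * L) T + 4 * K ^ 2 * L,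
    fun τ hτ e₀ e₁ e₂ he t ht => ?_⟩
  have c₀ : Continuous (e₀ t) := he.contDiff₀.continuous.uncurry_left t
  have c₁ : Continuous (e₁ t) := he.contDiff₁.continuous.uncurry_left t
  have hφ : IntervalIntegrable (errorEnergy τ g e₀ e₁ e₂ t) volume 0 L :=
    ((contDiff_errorEnergy hc.contDiff_g he.contDiff₀ he.contDiff₁
      he.contDiff₂).continuous.uncurry_left t).intervalIntegrable _ _
  calc ∫ x in (0 : ℝ)..L, (e₀ t x ^ 2 + e₁ t x ^ 2)
      ≤ ∫ x in (0 : ℝ)..L, (4 * errorEnergy τ g e₀ e₁ e₂ t x + 4 * K ^ 2 * τ ^ 2) :=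
        intervalIntegral.integral_mono_on hL
          (((c₀.pow 2).add (c₁.pow 2)).intervalIntegrable _ _)
          ((hφ.const_mul 4).add intervalIntegrable_const)
          fun x _ => sq_add_sq_le_errorEnergy hτ.1.le (hc.abs_g_le t ht x)
    _ = 4 * (∫ x in (0 : ℝ)..L, errorEnergy τ g e₀ e₁ e₂ t x) + 4 * K ^ 2 * L * τ ^ 2 := by
        rw [intervalIntegral.integral_add (hφ.const_mul 4) intervalIntegrable_const,
          intervalIntegral.integral_const_mul, intervalIntegral.integral_const, smul_eq_mul]
        ring
    _ ≤ _ := by linarith [integral_errorEnergy_le hL hf hf' hτ hc he ht]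

end ErrorSystem

section Approximation

variable {L T τ : ℝ} {f : ℝ → ℝ} {u q₀ q₁ q₂ : ℝ → ℝ → ℝ}

/-- `(q₀, q₁, q₂)` is a classical `L`-periodic solution on `[0, T]` of the hyperbolic approximation
of the generalized Benjamin–Bona–Mahony equation with relaxation parameter `τ`. The functions
are defined for all times, the equations imposed on `[0, T]` only. -/
structure IsHyperbolicBBMSolution (L T τ : ℝ) (f : ℝ → ℝ) (q₀ q₁ q₂ : ℝ → ℝ → ℝ) : Prop where
  contDiff₀ : ContDiff ℝ 1 (uncurry q₀)
  contDiff₁ : ContDiff ℝ 1 (uncurry q₁)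
  contDiff₂ : ContDiff ℝ 1 (uncurry q₂)
  periodic₀ : ∀ t, Periodic (q₀ t) L
  periodic₁ : ∀ t, Periodic (q₁ t) L
  periodic₂ : ∀ t, Periodic (q₂ t) L
  eq₀ : ∀ t ∈ Icc 0 T, ∀ x, pdt q₀ t x + pdx (fun s y => f (q₀ s y)) t x + pdx q₂ t x = 0
  eq₁ : ∀ t ∈ Icc 0 T, ∀ x, pdt q₁ t x + τ * pdx q₁ t x = -q₂ t x
  eq₂ : ∀ t ∈ Icc 0 T, ∀ x, τ * pdt q₂ t x + pdx q₀ t x = q₁ t x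

lemma contDiff_pdt_pdx {n : WithTop ℕ∞} (hu : ContDiff ℝ (n + 1 + 1) (uncurry u)) :
    ContDiff ℝ n (uncurry (pdt (pdx u))) :=
  contDiff_uncurry_pdt (contDiff_uncurry_pdx hu le_rfl) le_rfl

lemma exists_isCoefficientBound (hL : 0 < L) (hu : ContDiff ℝ 4 (uncurry u))
    (huper : ∀ t, Periodic (u t) L) (T : ℝ) :
    ∃ K, IsCoefficientBound L T K u (pdx (pdx u)) (pdt (pdt (pdx u))) := by
  have hu_one : ContDiff ℝ 1 (uncurry u) := hu.of_le (by norm_num)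
  have hux : ContDiff ℝ 1 (uncurry (pdx u)) := contDiff_uncurry_pdx hu (by norm_num)
  have hz : ContDiff ℝ 2 (uncurry (pdt (pdx u))) := contDiff_pdt_pdx (hu.of_le (by norm_num))
  have hg : ContDiff ℝ 1 (uncurry (pdt (pdt (pdx u)))) := contDiff_uncurry_pdt hz (by norm_num)
  have huxper := periodic_pdx huper
  have hgper := periodic_pdt (periodic_pdt huxper)
  obtain ⟨K, hKux, hKuxx, hKg, hKgt, hKgx⟩ :=
    ((eventually_forall_abs_le_of_periodic hL hux.continuous huxper 0 T).and <|
      (eventually_forall_abs_le_of_periodic hL (continuous_uncurry_pdx hux)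
        (periodic_pdx huxper) 0 T).and <|
      (eventually_forall_abs_le_of_periodic hL hg.continuous hgper 0 T).and <|
      (eventually_forall_abs_le_of_periodic hL (continuous_uncurry_pdt hg)
        (periodic_pdt hgper) 0 T).and <|
      eventually_forall_abs_le_of_periodic hL (continuous_uncurry_pdx hg)
        (periodic_pdx hgper) 0 T).exists
  exact ⟨K, hu_one, hg, huper, hgper, hKux, hKuxx, hKg, hKgt, hKgx⟩

lemma IsHyperbolicBBMSolution.isErrorSystem (hq : IsHyperbolicBBMSolution L T τ f q₀ q₁ q₂)
    (hu : ContDiff ℝ 3 (uncurry u)) (huper : ∀ t, Periodic (u t) L)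
    (hueq : ∀ t ∈ Icc 0 T, ∀ x,
      pdt u t x + pdx (fun s y => f (u s y)) t x - pdx (pdx (pdt u)) t x = 0)
    (hi₀ : ∀ x, q₀ 0 x = u 0 x) (hi₁ : ∀ x, q₁ 0 x = pdx u 0 x)
    (hi₂ : ∀ x, q₂ 0 x = -pdt (pdx u) 0 x) :
    IsErrorSystem L T τ f u (pdx (pdx u)) (pdt (pdt (pdx u)))
      (q₀ - u) (q₁ - pdx u) (q₂ + pdt (pdx u)) := by
  have hu_one : ContDiff ℝ 1 (uncurry u) := hu.of_le (by norm_num)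
  have hux : ContDiff ℝ 1 (uncurry (pdx u)) := contDiff_uncurry_pdx hu (by norm_num)
  have hz : ContDiff ℝ 1 (uncurry (pdt (pdx u))) := contDiff_pdt_pdx (hu.of_le (by norm_num))
  have huxper := periodic_pdx huper
  have hu_diff := hu_one.differentiable one_ne_zero
  have hux_diff := hux.differentiable one_ne_zero
  have hz_diff := hz.differentiable one_ne_zero
  have hq₀ := hq.contDiff₀.differentiable one_ne_zero
  have hq₁ := hq.contDiff₁.differentiable one_ne_zero
  have hq₂ := hq.contDiff₂.differentiable one_ne_zero
  rw [pdx_pdt_comm (hu.of_le (by norm_num))] at hueq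
  refine ⟨hq.contDiff₀.sub hu_one, hq.contDiff₁.sub hux, hq.contDiff₂.add hz,
    fun t => (hq.periodic₀ t).sub (huper t), fun t => (hq.periodic₁ t).sub (huxper t),
    fun t => (hq.periodic₂ t).add (periodic_pdt huxper t), fun t ht x => ?_, fun t ht x => ?_,
    fun t ht x => ?_, fun x => sub_eq_zero.2 (hi₀ x), fun x => sub_eq_zero.2 (hi₁ x),
    fun x => add_eq_zero_iff_eq_neg.2 (hi₂ x)⟩
  · rw [pdt_sub hq₀ hu_diff, pdx_add hq₂ hz_diff, add_sub_cancel]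
    simp only [Pi.sub_apply, Pi.add_apply]
    linear_combination hq.eq₀ t ht x - hueq t ht x
  · rw [pdt_sub hq₁ hux_diff, pdx_sub hq₁ hux_diff]
    simp only [Pi.sub_apply, Pi.add_apply]
    linear_combination hq.eq₁ t ht x
  · rw [pdt_add hq₂ hz_diff, pdx_sub hq₀ hu_diff]
    simp only [Pi.sub_apply, Pi.add_apply]
    linear_combination hq.eq₂ t ht x

end Approximation

theorem bbm_hyperbolic_convergence_general {L T : ℝ} (hL : 0 < L) {f : ℝ → ℝ}
    (hf : Differentiable ℝ f) {M : ℝ≥0} (hf' : LipschitzWith M (deriv f)) {u : ℝ → ℝ → ℝ}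
    (hu : ContDiff ℝ 4 (uncurry u)) (huper : ∀ t, Periodic (u t) L)
    (hueq : ∀ t ∈ Icc 0 T, ∀ x,
      pdt u t x + pdx (fun s y => f (u s y)) t x - pdx (pdx (pdt u)) t x = 0) :
    ∃ C > 0, ∀ τ ∈ Ioc 0 1, ∀ q₀ q₁ q₂ : ℝ → ℝ → ℝ, IsHyperbolicBBMSolution L T τ f q₀ q₁ q₂ →
      (∀ x, q₀ 0 x = u 0 x) → (∀ x, q₁ 0 x = pdx u 0 x) → (∀ x, q₂ 0 x = -pdt (pdx u) 0 x) →
      ∀ t ∈ Icc 0 T,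
        √(∫ x in (0 : ℝ)..L, (u t x - q₀ t x) ^ 2) + √(∫ x in (0 : ℝ)..L, (pdx u t x - q₁ t x) ^ 2)
          ≤ C * τ := by
  obtain ⟨K, hK⟩ := exists_isCoefficientBound hL hu huper T
  obtain ⟨D, hD⟩ := exists_integral_sq_error_le hL.le hf hf' hK
  refine ⟨2 * √D + 1, by positivity, fun τ hτ q₀ q₁ q₂ hq hi₀ hi₁ hi₂ t ht => ?_⟩
  have he := hq.isErrorSystem (hu.of_le (by norm_num)) huper hueq hi₀ hi₁ hi₂
  have hle := Real.sqrt_le_sqrt (hD τ hτ _ _ _ he t ht)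
  rw [Real.sqrt_mul' _ (sq_nonneg τ), Real.sqrt_sq hτ.1.le] at hle
  simp only [sub_sq_comm (u t _), sub_sq_comm (pdx u t _)]
  calc √(∫ x in (0 : ℝ)..L, (q₀ t x - u t x) ^ 2) + √(∫ x in (0 : ℝ)..L, (q₁ t x - pdx u t x) ^ 2)
      ≤ 2 * √(∫ x in (0 : ℝ)..L, ((q₀ t x - u t x) ^ 2 + (q₁ t x - pdx u t x) ^ 2)) :=
        sqrt_integral_sq_add_sqrt_integral_sq_le hL.le
          (he.contDiff₀.continuous.uncurry_left t) (he.contDiff₁.continuous.uncurry_left t)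
    _ ≤ 2 * (√D * τ) := mul_le_mul_of_nonneg_left hle zero_le_two
    _ ≤ (2 * √D + 1) * τ := by linarith [hτ.1]

/-- Convergence of the hyperbolic approximation to the generalized
Benjamin–Bona–Mahony equation (Theorem 2.1 of the paper, for classical
solutions of the hyperbolic approximation): the `L²(0,L)` errors of `q₀` and
`q₁` are `O(τ)` uniformly on `[0,T]`. -/
theorem bbm_hyperbolic_convergence
    (L T : ℝ) (hL : 0 < L) (hT : 0 < T)
    (f : ℝ → ℝ) (hf : ContDiff ℝ 2 f)
    (hf'' : ∃ M, ∀ x : ℝ, |deriv (deriv f) x| ≤ M)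
    (u : ℝ → ℝ → ℝ) (hu : ContDiff ℝ (⊤ : ℕ∞) (Function.uncurry u))
    (huper : ∀ t, Function.Periodic (u t) L)
    (hubd : ∀ i j : ℕ, ∃ M, ∀ t x : ℝ, |pdt^[i] (pdx^[j] u) t x| ≤ M)
    (hueq : ∀ t ∈ Set.Icc (0:ℝ) T, ∀ x : ℝ,
      pdt u t x + pdx (fun s y => f (u s y)) t x - pdx (pdx (pdt u)) t x = 0) :
    ∃ C > 0, ∀ τ ∈ Set.Ioc (0:ℝ) 1, ∀ q₀ q₁ q₂ : ℝ → ℝ → ℝ,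
      ContDiff ℝ 1 (Function.uncurry q₀) →
      ContDiff ℝ 1 (Function.uncurry q₁) →
      ContDiff ℝ 1 (Function.uncurry q₂) →
      (∀ t, Function.Periodic (q₀ t) L) →
      (∀ t, Function.Periodic (q₁ t) L) →
      (∀ t, Function.Periodic (q₂ t) L) →
      (∀ t ∈ Set.Icc (0:ℝ) T, ∀ x : ℝ,
        pdt q₀ t x + pdx (fun s y => f (q₀ s y)) t x + pdx q₂ t x = 0) →
      (∀ t ∈ Set.Icc (0:ℝ) T, ∀ x : ℝ,
        pdt q₁ t x + τ * pdx q₁ t x = - q₂ t x) →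
      (∀ t ∈ Set.Icc (0:ℝ) T, ∀ x : ℝ,
        τ * pdt q₂ t x + pdx q₀ t x = q₁ t x) →
      (∀ x : ℝ, q₀ 0 x = u 0 x) →
      (∀ x : ℝ, q₁ 0 x = pdx u 0 x) →
      (∀ x : ℝ, q₂ 0 x = - pdt (pdx u) 0 x) →
      ∀ t ∈ Set.Icc (0:ℝ) T,
        Real.sqrt (∫ x in (0:ℝ)..L, (u t x - q₀ t x) ^ 2)
          + Real.sqrt (∫ x in (0:ℝ)..L, (pdx u t x - q₁ t x) ^ 2)
          ≤ C * τ := by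
  obtain ⟨M, hM⟩ := hf''
  have hf' : LipschitzWith M.toNNReal (deriv f) := lipschitzWith_of_nnnorm_deriv_le
    hf.differentiable_deriv_two fun x => NNReal.le_toNNReal_of_coe_le (hM x)
  obtain ⟨C, hC, h⟩ := bbm_hyperbolic_convergence_general hL (hf.differentiable two_ne_zero) hf'
    (contDiff_infty.1 hu 4) huper hueq
  exact ⟨C, hC, fun τ hτ q₀ q₁ q₂ hq₀ hq₁ hq₂ hper₀ hper₁ hper₂ heq₀ heq₁ heq₂ =>
    h τ hτ q₀ q₁ q₂ ⟨hq₀, hq₁, hq₂, hper₀, hper₁, hper₂, heq₀, heq₁, heq₂⟩⟩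
end

section
/- Let m ≥ 2 be even, σ₀ = (−1)^{m/2}, and L, T, τ > 0. Let q₀, q₁, …, q_{m−1} : [0,T] × ℝ → ℝ be C¹ functions, L-periodic in x, satisfying ∂_t q₀ + σ₀ ∂_x q_{m−1} = 0; τ ∂_t q_j + σ₀ (−1)^j ∂_x q_{m−j−1} = σ₀ (−1)^j q_{m−j} for j ∈ {1, …, m/2 − 1}; and τ ∂_t q_j + σ₀ (−1)^{j+m−1} ∂_x q_{m−j−1} = σ₀ (−1)^{j+m−1} q_{m−j} for j ∈ {m/2, …, m−1}. Then for all t ∈ [0,T], d/dt η(q)(t) = −∫₀^L q_{m/2}(t,x)² dx ≤ 0; in particular the energy η(q) is nonincreasing on [0,T]. -/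
/-!
Written for the vector `U = (q₀, …, q_{m-1})`, the system is `D ∂_t U + A ∂_x U = B U` with constant
matrices, where `D` is diagonal and `A` is symmetric. Pairing it with `U` gives the local energy
balance `∂_t (U · D U / 2) + ∂_x (U · A U / 2) = U · B U`, whose flux term integrates to zero over a
period. The choice of signs makes `B` antisymmetric except for the single diagonal entry `-1` at
position `m / 2`, so `U · B U = -q_{m/2}²`.
-/

open MeasureTheory

section EnergyBalance

open Matrix

theorem hasDerivAt_intervalIntegral_of_contDiff {E : Type*} [NormedAddCommGroup E]
    [NormedSpace ℝ E] {f : ℝ → ℝ → E} (hf : ContDiff ℝ 1 (Function.uncurry f)) (a b t : ℝ) :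
    HasDerivAt (fun s => ∫ x in a..b, f s x) (∫ x in a..b, deriv (fun s => f s x) t) t := by
  have hderiv (s x : ℝ) :
      HasDerivAt (fun r => f r x) (fderiv ℝ (Function.uncurry f) (s, x) (1, 0)) s :=
    (hf.differentiable one_ne_zero (s, x)).hasFDerivAt.comp_hasDerivAt (f := fun r => (r, x)) s
      ((hasDerivAt_id s).prodMk (hasDerivAt_const s x))
  have hcont : Continuous fun p : ℝ × ℝ => fderiv ℝ (Function.uncurry f) p (1, 0) :=
    (hf.continuous_fderiv one_ne_zero).clm_apply continuous_const
  obtain ⟨C, hC⟩ := ((isCompact_Icc (a := t - 1) (b := t + 1)).prod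
    (isCompact_uIcc (a := a) (b := b))).exists_bound_of_continuousOn hcont.continuousOn
  simp only [(hderiv t _).deriv]
  exact (intervalIntegral.hasDerivAt_integral_of_dominated_loc_of_deriv_le
    (F' := fun s x => fderiv ℝ (Function.uncurry f) (s, x) (1, 0)) (bound := fun _ => C)
    (Icc_mem_nhds (sub_one_lt t) (lt_add_one t))
    (.of_forall fun s => (hf.continuous.comp (.prodMk_right s)).aestronglyMeasurable)
    ((hf.continuous.comp (.prodMk_right t)).intervalIntegrable _ _)
    (hcont.comp (.prodMk_right t)).aestronglyMeasurable
    (.of_forall fun x hx s hs => hC (s, x) ⟨hs, Set.uIoc_subset_uIcc hx⟩)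
    intervalIntegrable_const
    (.of_forall fun x _ s _ => hderiv s x)).2

variable {ι : Type*} [Fintype ι] {D A B : Matrix ι ι ℝ}

theorem hasDerivAt_dotProduct {v w : ℝ → ι → ℝ} {v' w' : ι → ℝ} {x : ℝ}
    (hv : HasDerivAt v v' x) (hw : HasDerivAt w w' x) :
    HasDerivAt (fun y => v y ⬝ᵥ w y) (v' ⬝ᵥ w x + v x ⬝ᵥ w') x := by
  simp only [dotProduct, ← Finset.sum_add_distrib]
  exact .fun_sum fun i _ => (hasDerivAt_pi.mp hv i).mul (hasDerivAt_pi.mp hw i)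

theorem hasDerivAt_dotProduct_mulVec_self_div_two (hA : A.IsSymm) {v : ℝ → ι → ℝ} {v' : ι → ℝ}
    {x : ℝ} (hv : HasDerivAt v v' x) :
    HasDerivAt (fun y => v y ⬝ᵥ A *ᵥ v y / 2) (v x ⬝ᵥ A *ᵥ v') x := by
  have hAv : HasDerivAt (fun y => A *ᵥ v y) (A *ᵥ v') x :=
    A.mulVecLin.toContinuousLinearMap.hasFDerivAt.comp_hasDerivAt x hv
  refine ((hasDerivAt_dotProduct hv hAv).div_const 2).congr_deriv ?_
  rw [← dotProduct_transpose_mulVec, hA.eq, add_self_div_two]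

theorem contDiff_dotProduct_mulVec_self {F : Type*} [NormedAddCommGroup F] [NormedSpace ℝ F]
    {n : WithTop ℕ∞} (A : Matrix ι ι ℝ) {v : F → ι → ℝ} (hv : ContDiff ℝ n v) :
    ContDiff ℝ n fun y => v y ⬝ᵥ A *ᵥ v y :=
  have hv_apply (i : ι) : ContDiff ℝ n fun y => v y i := contDiff_pi.mp hv i
  ContDiff.sum fun i _ => (hv_apply i).mul <|
    ContDiff.sum fun j _ => contDiff_const.mul (hv_apply j)

theorem hasDerivAt_integral_energy (hD : D.IsSymm) (hA : A.IsSymm) {U : ℝ → ℝ → ι → ℝ}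
    (hU : ContDiff ℝ 1 (Function.uncurry U)) {a b t : ℝ}
    (hsys : ∀ x ∈ Set.uIcc a b,
      D *ᵥ deriv (fun s => U s x) t + A *ᵥ deriv (U t) x = B *ᵥ U t x) :
    HasDerivAt (fun s => ∫ x in a..b, U s x ⬝ᵥ D *ᵥ U s x / 2)
      ((∫ x in a..b, U t x ⬝ᵥ B *ᵥ U t x) -
        (U t b ⬝ᵥ A *ᵥ U t b / 2 - U t a ⬝ᵥ A *ᵥ U t a / 2)) t := by
  have hU_time (x : ℝ) : HasDerivAt (fun s => U s x) (deriv (fun s => U s x) t) t :=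
    ((hU.comp (contDiff_prodMk_left x)).differentiable one_ne_zero t).hasDerivAt
  have hU_slice : ContDiff ℝ 1 (U t) := hU.comp (contDiff_prodMk_right t)
  have hflux (x : ℝ) :
      HasDerivAt (fun y => U t y ⬝ᵥ A *ᵥ U t y / 2) (U t x ⬝ᵥ A *ᵥ deriv (U t) x) x :=
    hasDerivAt_dotProduct_mulVec_self_div_two hA
      (hU_slice.differentiable one_ne_zero x).hasDerivAt
  have hflux_int : IntervalIntegrable (fun x => U t x ⬝ᵥ A *ᵥ deriv (U t) x) volume a b :=
    (hU_slice.continuous.dotProduct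
      (continuous_const.matrix_mulVec (hU_slice.continuous_deriv le_rfl))).intervalIntegrable _ _
  have hsource_int : IntervalIntegrable (fun x => U t x ⬝ᵥ B *ᵥ U t x) volume a b :=
    (contDiff_dotProduct_mulVec_self B hU_slice).continuous.intervalIntegrable _ _
  have hbalance : ∀ x ∈ Set.uIcc a b, deriv (fun s => U s x ⬝ᵥ D *ᵥ U s x / 2) t =
      U t x ⬝ᵥ B *ᵥ U t x - U t x ⬝ᵥ A *ᵥ deriv (U t) x := fun x hx => by
    rw [(hasDerivAt_dotProduct_mulVec_self_div_two hD (hU_time x)).deriv, ← hsys x hx,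
      dotProduct_add, add_sub_cancel_right]
  refine (hasDerivAt_intervalIntegral_of_contDiff (f := fun s x => U s x ⬝ᵥ D *ᵥ U s x / 2)
    ((contDiff_dotProduct_mulVec_self D hU).div_const 2) a b t).congr_deriv ?_
  rw [intervalIntegral.integral_congr hbalance,
    intervalIntegral.integral_sub hsource_int hflux_int,
    intervalIntegral.integral_eq_sub_of_hasDerivAt (fun x _ => hflux x) hflux_int]

theorem deriv_time_eq_pdt {U : ℝ → ℝ → ι → ℝ} (hU : ContDiff ℝ 1 (Function.uncurry U)) (t x : ℝ) :
    deriv (fun s => U s x) t = fun i => pdt (fun s y => U s y i) t x :=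
  deriv_pi <| differentiableAt_pi.mp <|
    (hU.comp (contDiff_prodMk_left x)).differentiable one_ne_zero t

theorem deriv_space_eq_pdx {U : ℝ → ℝ → ι → ℝ} (hU : ContDiff ℝ 1 (Function.uncurry U)) (t x : ℝ) :
    deriv (U t) x = fun i => pdx (fun s y => U s y i) t x :=
  deriv_pi <| differentiableAt_pi.mp <|
    (hU.comp (contDiff_prodMk_right t)).differentiable one_ne_zero x

end EnergyBalance

section HyperbolicApproximation

open Matrix

/-- The common coefficient of the flux and of the source in the `j`-th equation of the hyperbolic
approximation of order `m = 2 * k`: `σ₀ (-1)^j` for `j < k` and `σ₀ (-1)^(j + m - 1)` for `k ≤ j`,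
where `σ₀ = (-1)^k`. -/
noncomputable def equationSign (k j : ℕ) : ℝ :=
  if j < k then (-1) ^ (k + j) else (-1) ^ (k + j + 1)

/-- The matrix `D` of the hyperbolic approximation `D ∂_t U + A ∂_x U = B U` of order `2 * k`, which
also weights the energy `U · D U / 2`; only the equation for `q₀` has no factor `τ`. -/
noncomputable def relaxationMatrix (k : ℕ) (τ : ℝ) : Matrix (Fin (2 * k)) (Fin (2 * k)) ℝ :=
  diagonal fun i => if (i : ℕ) = 0 then 1 else τ

/-- The matrix `A` of the hyperbolic approximation `D ∂_t U + A ∂_x U = B U` of order `2 * k`: the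
`i`-th equation transports `q_{m-i-1}`, so `A` is supported on the antidiagonal. -/
noncomputable def fluxMatrix (k : ℕ) : Matrix (Fin (2 * k)) (Fin (2 * k)) ℝ :=
  .of fun i j => if (i : ℕ) + j + 1 = 2 * k then equationSign k i else 0

/-- The matrix `B` of the hyperbolic approximation `D ∂_t U + A ∂_x U = B U` of order `2 * k`: the
`i`-th equation has source `q_{m-i}`. Row `0` vanishes, as the index `m` is out of range. -/
noncomputable def sourceMatrix (k : ℕ) : Matrix (Fin (2 * k)) (Fin (2 * k)) ℝ :=
  .of fun i j => if (i : ℕ) + j = 2 * k then equationSign k i else 0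

theorem equationSign_of_lt {k j : ℕ} (hj : j < k) :
    equationSign k j = (-1) ^ k * (-1) ^ j := by
  rw [equationSign, if_pos hj, pow_add]

theorem equationSign_of_le {k j : ℕ} (hk : 0 < k) (hj : k ≤ j) :
    equationSign k j = (-1) ^ k * (-1) ^ (j + 2 * k - 1) := by
  rw [equationSign, if_neg hj.not_gt, ← pow_add]
  exact neg_one_pow_congr (by grind)

theorem equationSign_self (k : ℕ) : equationSign k k = -1 := by
  rw [equationSign, if_neg (lt_irrefl k)]
  exact (Even.add_self k).add_one.neg_one_pow

theorem equationSign_eq_of_add_add_one_eq {k i j : ℕ} (hij : i + j + 1 = 2 * k) :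
    equationSign k i = equationSign k j := by
  unfold equationSign
  split_ifs
  · omega
  · exact neg_one_pow_congr (by grind)
  · exact neg_one_pow_congr (by grind)
  · omega

theorem equationSign_add_of_add_eq {k i j : ℕ} (hij : i + j = 2 * k) (hne : i ≠ j) :
    equationSign k i + equationSign k j = 0 := by
  wlog hlt : i < j generalizing i j
  · rw [add_comm]
    exact this (by omega) hne.symm (by omega)
  have hparity : (-1 : ℝ) ^ (k + j) = (-1) ^ (k + i) := neg_one_pow_congr (by grind)
  rw [equationSign, equationSign, if_pos (by omega), if_neg (by omega), pow_succ, hparity]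
  ring

theorem isSymm_relaxationMatrix (k : ℕ) (τ : ℝ) : (relaxationMatrix k τ).IsSymm :=
  isSymm_diagonal _

theorem isSymm_fluxMatrix (k : ℕ) : (fluxMatrix k).IsSymm := by
  refine .ext fun i j => ?_
  simp only [fluxMatrix, of_apply, add_comm (j : ℕ)]
  split_ifs with hij
  · exact (equationSign_eq_of_add_add_one_eq hij).symm
  · rfl

theorem sourceMatrix_add_transpose {k : ℕ} (hk : 0 < k) :
    sourceMatrix k + (sourceMatrix k)ᵀ = single ⟨k, by omega⟩ ⟨k, by omega⟩ (-2) := by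
  ext i j
  simp only [sourceMatrix, Matrix.add_apply, transpose_apply, of_apply, single_apply, Fin.ext_iff,
    add_comm (j : ℕ)]
  by_cases hij : (i : ℕ) + j = 2 * k
  · rw [if_pos hij, if_pos hij]
    by_cases hne : (i : ℕ) ≠ j
    · rw [if_neg (by omega), equationSign_add_of_add_eq hij hne]
    · rw [if_pos (by omega), show (i : ℕ) = k by omega, show (j : ℕ) = k by omega,
        equationSign_self]
      norm_num
  · rw [if_neg hij, if_neg hij, if_neg (by omega), add_zero]

theorem dotProduct_sourceMatrix_mulVec {k : ℕ} (hk : 0 < k) (v : Fin (2 * k) → ℝ) :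
    v ⬝ᵥ sourceMatrix k *ᵥ v = -v ⟨k, by omega⟩ ^ 2 := by
  have htwice := congrArg (v ⬝ᵥ · *ᵥ v) (sourceMatrix_add_transpose hk)
  simp only [add_mulVec, dotProduct_add, dotProduct_transpose_mulVec, single_mulVec_eq,
    dotProduct_smul, dotProduct_single, smul_eq_mul] at htwice
  linarith

theorem fluxMatrix_mulVec_apply {k : ℕ} (u : ℕ → ℝ) (i : Fin (2 * k)) :
    (fluxMatrix k *ᵥ fun j => u j) i = equationSign k i * u (2 * k - i - 1) := by
  have hlt : 2 * k - (i : ℕ) - 1 < 2 * k := by have := i.isLt; omega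
  have hcol (j : Fin (2 * k)) : (i : ℕ) + j + 1 = 2 * k ↔ j = ⟨2 * k - i - 1, hlt⟩ := by
    rw [Fin.eq_mk_iff_val_eq]
    omega
  simp [fluxMatrix, mulVec, dotProduct, hcol]

theorem sourceMatrix_mulVec_apply_of_eq_zero {k : ℕ} (v : Fin (2 * k) → ℝ) {i : Fin (2 * k)}
    (hi : (i : ℕ) = 0) : (sourceMatrix k *ᵥ v) i = 0 := by
  have hcol (j : Fin (2 * k)) : (i : ℕ) + j ≠ 2 * k := by omega
  simp [sourceMatrix, mulVec, dotProduct, hcol]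

theorem sourceMatrix_mulVec_apply_of_pos {k : ℕ} (u : ℕ → ℝ) {i : Fin (2 * k)}
    (hi : 0 < (i : ℕ)) :
    (sourceMatrix k *ᵥ fun j => u j) i = equationSign k i * u (2 * k - i) := by
  have hlt : 2 * k - (i : ℕ) < 2 * k := Nat.sub_lt i.pos hi
  have hcol (j : Fin (2 * k)) : (i : ℕ) + j = 2 * k ↔ j = ⟨2 * k - i, hlt⟩ := by
    rw [Fin.eq_mk_iff_val_eq]
    omega
  simp [sourceMatrix, mulVec, dotProduct, hcol]

theorem dotProduct_relaxationMatrix_mulVec_div_two {k : ℕ} (hk : 0 < k) (τ : ℝ) (u : ℕ → ℝ) :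
    (fun j : Fin (2 * k) => u j) ⬝ᵥ relaxationMatrix k τ *ᵥ (fun j => u j) / 2 =
      u 0 ^ 2 / 2 + τ / 2 * ∑ j ∈ Finset.Icc 1 (2 * k - 1), u j ^ 2 := by
  have hrange : Finset.range (2 * k) = insert 0 (Finset.Icc 1 (2 * k - 1)) := by
    ext j
    simp only [Finset.mem_range, Finset.mem_insert, Finset.mem_Icc]
    omega
  have htail : ∑ j ∈ Finset.Icc 1 (2 * k - 1), u j * ((if j = 0 then 1 else τ) * u j) =
      τ * ∑ j ∈ Finset.Icc 1 (2 * k - 1), u j ^ 2 := by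
    rw [Finset.mul_sum]
    refine Finset.sum_congr rfl fun j hj => ?_
    rw [if_neg (Nat.one_le_iff_ne_zero.mp (Finset.mem_Icc.mp hj).1)]
    ring
  simp only [relaxationMatrix, dotProduct, mulVec_diagonal]
  rw [Fin.sum_univ_eq_sum_range fun j => u j * ((if j = 0 then 1 else τ) * u j), hrange,
    Finset.sum_insert (by simp), htail, if_pos rfl]
  ring

theorem matrix_system_of_equations {k : ℕ} {τ : ℝ} {p r u : ℕ → ℝ}
    (h₀ : p 0 + (-1) ^ k * r (2 * k - 1) = 0)
    (hlow : ∀ j ∈ Finset.Icc 1 (k - 1),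
      τ * p j + (-1) ^ k * (-1) ^ j * r (2 * k - j - 1) = (-1) ^ k * (-1) ^ j * u (2 * k - j))
    (hhigh : ∀ j ∈ Finset.Icc k (2 * k - 1),
      τ * p j + (-1) ^ k * (-1) ^ (j + 2 * k - 1) * r (2 * k - j - 1) =
        (-1) ^ k * (-1) ^ (j + 2 * k - 1) * u (2 * k - j)) :
    relaxationMatrix k τ *ᵥ (fun j => p j) + fluxMatrix k *ᵥ (fun j => r j) =
      sourceMatrix k *ᵥ fun j => u j := by
  ext i
  have hk : 0 < k := Nat.pos_of_mul_pos_left i.pos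
  rw [Pi.add_apply, relaxationMatrix, mulVec_diagonal, fluxMatrix_mulVec_apply]
  rcases Nat.eq_zero_or_pos i with hi | hi
  · rw [sourceMatrix_mulVec_apply_of_eq_zero _ hi]
    simpa [hi, equationSign_of_lt hk] using h₀
  · rw [sourceMatrix_mulVec_apply_of_pos _ hi, if_neg hi.ne']
    rcases lt_or_ge (i : ℕ) k with hik | hik
    · rw [equationSign_of_lt hik]
      exact hlow i (Finset.mem_Icc.mpr (by omega))
    · rw [equationSign_of_le hk hik]
      exact hhigh i (Finset.mem_Icc.mpr (by omega))

theorem hasDerivAt_integral_hyperbolicApproximation_energy {k : ℕ} (hk : 0 < k) {τ a b t : ℝ}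
    {q : ℕ → ℝ → ℝ → ℝ} (hq : ∀ j < 2 * k, ContDiff ℝ 1 (Function.uncurry (q j)))
    (hbdry : ∀ j < 2 * k, q j t b = q j t a)
    (h₀ : ∀ x ∈ Set.uIcc a b, pdt (q 0) t x + (-1) ^ k * pdx (q (2 * k - 1)) t x = 0)
    (hlow : ∀ j ∈ Finset.Icc 1 (k - 1), ∀ x ∈ Set.uIcc a b,
      τ * pdt (q j) t x + (-1) ^ k * (-1) ^ j * pdx (q (2 * k - j - 1)) t x =
        (-1) ^ k * (-1) ^ j * q (2 * k - j) t x)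
    (hhigh : ∀ j ∈ Finset.Icc k (2 * k - 1), ∀ x ∈ Set.uIcc a b,
      τ * pdt (q j) t x + (-1) ^ k * (-1) ^ (j + 2 * k - 1) * pdx (q (2 * k - j - 1)) t x =
        (-1) ^ k * (-1) ^ (j + 2 * k - 1) * q (2 * k - j) t x) :
    HasDerivAt
      (fun s => ∫ x in a..b,
        (q 0 s x ^ 2 / 2 + τ / 2 * ∑ j ∈ Finset.Icc 1 (2 * k - 1), q j s x ^ 2))
      (-∫ x in a..b, q k t x ^ 2) t := by
  let U : ℝ → ℝ → Fin (2 * k) → ℝ := fun s x j => q j s x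
  have hU : ContDiff ℝ 1 (Function.uncurry U) := contDiff_pi.mpr fun j => hq j j.isLt
  have hU_bdry : U t b = U t a := funext fun j => hbdry j j.isLt
  have hsys : ∀ x ∈ Set.uIcc a b, relaxationMatrix k τ *ᵥ deriv (fun s => U s x) t +
      fluxMatrix k *ᵥ deriv (U t) x = sourceMatrix k *ᵥ U t x := fun x hx => by
    rw [deriv_time_eq_pdt hU, deriv_space_eq_pdx hU]
    exact matrix_system_of_equations (p := fun j => pdt (q j) t x)
      (r := fun j => pdx (q j) t x) (u := fun j => q j t x)
      (h₀ x hx) (hlow · · x hx) (hhigh · · x hx)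
  have henergy (s x : ℝ) : U s x ⬝ᵥ relaxationMatrix k τ *ᵥ U s x / 2 =
      q 0 s x ^ 2 / 2 + τ / 2 * ∑ j ∈ Finset.Icc 1 (2 * k - 1), q j s x ^ 2 :=
    dotProduct_relaxationMatrix_mulVec_div_two hk τ fun j => q j s x
  have hderiv := hasDerivAt_integral_energy (isSymm_relaxationMatrix k τ) (isSymm_fluxMatrix k) hU
    hsys
  simpa only [henergy, hU_bdry, sub_self, sub_zero, dotProduct_sourceMatrix_mulVec hk,
    intervalIntegral.integral_neg] using hderiv

end HyperbolicApproximation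

/-- Energy dissipation for the Ketcheson–Biswas hyperbolic approximation of the
linear higher-order equation `∂_t u + σ₀ ∂_x^m u = 0` with even leading order `m`
and the stability choice `σ₀ = (-1)^(m/2)`:
`d/dt η(q)(t) = -∫₀^L q_{m/2}² dx ≤ 0`, so the energy is nonincreasing. -/
theorem linear_even_order_hyperbolic_energy_dissipation
    (m : ℕ) (hm : Even m) (hm2 : 2 ≤ m)
    (σ₀ : ℝ) (hσ : σ₀ = (-1 : ℝ) ^ (m / 2))
    (L T τ : ℝ) (hL : 0 < L) (hT : 0 < T) (hτ : 0 < τ)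
    (q : ℕ → ℝ → ℝ → ℝ)
    (hq : ∀ j < m, ContDiff ℝ 1 (Function.uncurry (q j)))
    (hper : ∀ j < m, ∀ t, Function.Periodic (q j t) L)
    (heq₀ : ∀ t ∈ Set.Icc (0:ℝ) T, ∀ x : ℝ,
      pdt (q 0) t x + σ₀ * pdx (q (m - 1)) t x = 0)
    (heqlow : ∀ j ∈ Finset.Icc 1 (m / 2 - 1), ∀ t ∈ Set.Icc (0:ℝ) T, ∀ x : ℝ,
      τ * pdt (q j) t x + σ₀ * (-1 : ℝ) ^ j * pdx (q (m - j - 1)) t x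
        = σ₀ * (-1 : ℝ) ^ j * q (m - j) t x)
    (heqhigh : ∀ j ∈ Finset.Icc (m / 2) (m - 1), ∀ t ∈ Set.Icc (0:ℝ) T, ∀ x : ℝ,
      τ * pdt (q j) t x + σ₀ * (-1 : ℝ) ^ (j + m - 1) * pdx (q (m - j - 1)) t x
        = σ₀ * (-1 : ℝ) ^ (j + m - 1) * q (m - j) t x) :
    (∀ t ∈ Set.Icc (0:ℝ) T,
        HasDerivWithinAt
          (fun s => ∫ x in (0:ℝ)..L,
            (q 0 s x ^ 2 / 2 + τ / 2 * ∑ j ∈ Finset.Icc 1 (m - 1), q j s x ^ 2))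
          (- ∫ x in (0:ℝ)..L, q (m / 2) t x ^ 2)
          (Set.Icc (0:ℝ) T) t ∧
        (- ∫ x in (0:ℝ)..L, q (m / 2) t x ^ 2) ≤ 0) ∧
      AntitoneOn
        (fun s => ∫ x in (0:ℝ)..L,
          (q 0 s x ^ 2 / 2 + τ / 2 * ∑ j ∈ Finset.Icc 1 (m - 1), q j s x ^ 2))
        (Set.Icc (0:ℝ) T) := by
  obtain ⟨k, rfl⟩ := even_iff_two_dvd.mp hm
  rw [Nat.mul_div_cancel_left k two_pos] at hσ heqlow heqhigh ⊢
  subst hσ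
  have hdecay (t : ℝ) (ht : t ∈ Set.Icc 0 T) :=
    hasDerivAt_integral_hyperbolicApproximation_energy (by omega) hq
      (fun j hj => (hper j hj t).eq) (fun x _ => heq₀ t ht x)
      (fun j hj x _ => heqlow j hj t ht x) (fun j hj x _ => heqhigh j hj t ht x)
  have hnonpos (t : ℝ) : -∫ x in (0 : ℝ)..L, q k t x ^ 2 ≤ 0 :=
    neg_nonpos.mpr (intervalIntegral.integral_nonneg hL.le fun x _ => sq_nonneg _)
  exact ⟨fun t ht => ⟨(hdecay t ht).hasDerivWithinAt, hnonpos t⟩,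
    antitoneOn_of_hasDerivWithinAt_nonpos (convex_Icc 0 T)
      (fun t ht => (hdecay t ht).continuousAt.continuousWithinAt)
      (fun t ht => (hdecay t (interior_subset ht)).hasDerivWithinAt) fun t _ => hnonpos t⟩
end
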